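/- Let n ≥ 1, 1 ≤ p < ∞, and let f : ℝⁿ → ℝ be smooth with compact support. Then lim_{s → 1⁻} (1−s) 𝒩_{s,p}(f)^p = (4 Γ(p) / (p Γ(p/2))) ∫_{ℝⁿ} ‖∇f(x)‖^p dx. -/

import Mathlib

open Real MeasureTheory Filter Topology
open scoped ENNReal

/-!
Let `H t` be the inner double integral of the Besov seminorm. The substitution
`t = exp (-v / (1 - s))` and dominated convergence turn the limit `s → 1⁻` of
`(1 - s) ∫ t ^ (-(s p / 2 + 1)) H t dt` into `(2 / p) lim_{t → 0⁺} t ^ (-p / 2) H t`.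

The heat kernel `p_t(x, ·)` is the law of `x + √(2 t) Z` with `Z` standard Gaussian, so `H t` is the
expectation of `∫ |f (x + √(2 t) Z) - f x| ^ p dx`. By Rademacher's theorem and dominated
convergence, the rescaled limit is `2 ^ (p / 2) ∫ 𝔼 |Df(x) Z| ^ p dx`. Since `Df(x) Z` is a centred
Gaussian of standard deviation `‖Df(x)‖`, only the `p`-th absolute moment of a standard real
Gaussian is left, and Legendre's duplication formula puts it in the stated form.
-/

open ProbabilityTheory Module

section AbelianLimit

lemma lintegral_Ioi_zero_eq_lintegral_comp_exp_neg_mul {l : ℝ} (hl : 0 < l) (F : ℝ → ℝ≥0∞) :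
    ∫⁻ t in Set.Ioi 0, F t = ∫⁻ v, ENNReal.ofReal (l * exp (-l * v)) * F (exp (-l * v)) := by
  have range_eq : (fun v : ℝ => exp (-l * v)) '' Set.univ = Set.Ioi 0 := by
    rw [Set.image_univ, ← Real.range_exp]
    exact (mul_left_surjective₀ (neg_ne_zero.2 hl.ne')).range_comp exp
  have deriv_exp (v : ℝ) (_ : v ∈ Set.univ) :
      HasDerivWithinAt (fun v : ℝ => exp (-l * v)) (exp (-l * v) * -l) Set.univ v := by
    simpa using ((hasDerivAt_id v).const_mul (-l)).exp
  have injOn_exp : Set.InjOn (fun v : ℝ => exp (-l * v)) Set.univ :=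
    (Real.exp_injective.comp (mul_right_injective₀ (neg_ne_zero.2 hl.ne'))).injOn
  rw [← range_eq, lintegral_image_eq_lintegral_abs_deriv_mul .univ deriv_exp injOn_exp,
    Measure.restrict_univ]
  simp only [abs_mul, abs_exp, abs_neg, abs_of_pos hl, mul_comm l]

lemma one_sub_mul_lintegral_rpow_eq {s : ℝ} (hs : s < 1) (a : ℝ) (H : ℝ → ℝ≥0∞) :
    ENNReal.ofReal (1 - s) *
        ∫⁻ t in Set.Ioi (0 : ℝ), ENNReal.ofReal (t ^ (-(s * a + 1))) * H t =
      ∫⁻ v, ENNReal.ofReal (exp (-a * v)) *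
        (ENNReal.ofReal (exp (-(1 - s)⁻¹ * v) ^ (-a)) * H (exp (-(1 - s)⁻¹ * v))) := by
  have hs' : 0 < 1 - s := sub_pos.2 hs
  rw [lintegral_Ioi_zero_eq_lintegral_comp_exp_neg_mul (inv_pos.2 hs'),
    ← lintegral_const_mul' _ _ ENNReal.ofReal_ne_top]
  refine lintegral_congr fun v => ?_
  simp only [← mul_assoc]
  rw [← ENNReal.ofReal_mul hs'.le, ← ENNReal.ofReal_mul (by positivity),
    ← ENNReal.ofReal_mul (by positivity), mul_inv_cancel_left₀ hs'.ne', ← exp_mul, ← exp_mul,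
    ← exp_add, ← exp_add]
  congr 3
  field_simp
  ring

lemma lintegral_ofReal_exp_neg_mul_abs_lt_top {a : ℝ} (ha : 0 < a) :
    ∫⁻ v : ℝ, ENNReal.ofReal (exp (-a * |v|)) < ∞ :=
  have integrable_exp : Integrable fun v : ℝ => exp (-a * ‖v‖) :=
    (integrable_fun_norm_addHaar volume (f := fun v => exp (-a * v))).2 <| by
      simpa using integrableOn_exp_mul_Ioi (neg_neg_of_pos ha) 0
  integrable_exp.lintegral_lt_top

lemma lintegral_Ioi_zero_ofReal_exp_neg_mul {a : ℝ} (ha : 0 < a) :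
    ∫⁻ v in Set.Ioi (0 : ℝ), ENNReal.ofReal (exp (-a * v)) = ENNReal.ofReal a⁻¹ := by
  rw [← ofReal_integral_eq_lintegral_ofReal (integrableOn_exp_mul_Ioi (neg_neg_of_pos ha) 0)
    (ae_of_all _ fun _ => (exp_pos _).le), integral_exp_mul_Ioi (neg_neg_of_pos ha)]
  simp

variable {a : ℝ} {G : ℝ → ℝ≥0∞} {C C' L : ℝ≥0∞}

lemma exp_mul_comp_exp_le (ha : 0 < a) (hG : ∀ t > 0, G t ≤ C)
    (hG' : ∀ t > 0, G t ≤ C' * ENNReal.ofReal (t ^ (-a))) {l : ℝ} (hl : 2 ≤ l) (v : ℝ) :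
    ENNReal.ofReal (exp (-a * v)) * G (exp (-l * v)) ≤
      max C C' * ENNReal.ofReal (exp (-a * |v|)) := by
  rw [mul_comm]
  rcases le_total 0 v with hv | hv
  · rw [abs_of_nonneg hv]
    gcongr
    exact (hG _ (exp_pos _)).trans (le_max_left _ _)
  · calc
      _ ≤ C' * ENNReal.ofReal (exp (-l * v) ^ (-a)) * ENNReal.ofReal (exp (-a * v)) := by
        gcongr
        exact hG' _ (exp_pos _)
      _ = C' * ENNReal.ofReal (exp (a * v * (l - 1))) := by
        rw [mul_assoc, ← ENNReal.ofReal_mul (by positivity), ← exp_mul, ← exp_add]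
        ring_nf
      _ ≤ _ := by
        have exponent_le : a * v * (l - 1) ≤ -a * |v| := by
          rw [abs_of_nonpos hv]
          nlinarith [mul_nonpos_of_nonneg_of_nonpos ha.le hv]
        gcongr
        exact le_max_right _ _

lemma tendsto_exp_mul_comp_exp_of_pos (hlim : Tendsto G (𝓝[>] 0) (𝓝 L)) {v : ℝ} (hv : 0 < v) :
    Tendsto (fun l => ENNReal.ofReal (exp (-a * v)) * G (exp (-l * v))) atTop
      (𝓝 (ENNReal.ofReal (exp (-a * v)) * L)) := by
  refine ENNReal.Tendsto.const_mul (hlim.comp ?_) (.inr ENNReal.ofReal_ne_top)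
  exact tendsto_exp_atBot_nhdsGT.comp (tendsto_neg_atTop_atBot.atBot_mul_const hv)

lemma tendsto_exp_mul_comp_exp_of_neg (ha : 0 < a) (hC' : C' ≠ ∞)
    (hG' : ∀ t > 0, G t ≤ C' * ENNReal.ofReal (t ^ (-a))) {v : ℝ} (hv : v < 0) :
    Tendsto (fun l => ENNReal.ofReal (exp (-a * v)) * G (exp (-l * v))) atTop (𝓝 0) := by
  have exponent_tendsto : Tendsto (fun l => a * v * l) atTop atBot :=
    tendsto_id.const_mul_atTop_of_neg (mul_neg_of_pos_of_neg ha hv)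
  have bound_tendsto : Tendsto (fun l => ENNReal.ofReal (exp (-a * v)) *
      (C' * ENNReal.ofReal (exp (a * v * l)))) atTop (𝓝 0) := by
    have := ENNReal.tendsto_ofReal (tendsto_exp_atBot.comp exponent_tendsto)
    simpa using ENNReal.Tendsto.const_mul (ENNReal.Tendsto.const_mul this (.inr hC'))
      (.inr (ENNReal.ofReal_ne_top (r := exp (-a * v))))
  refine tendsto_of_tendsto_of_tendsto_of_le_of_le tendsto_const_nhds bound_tendsto
    (fun _ => zero_le) fun l => ?_
  have rpow_eq : exp (-l * v) ^ (-a) = exp (a * v * l) := by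
    rw [← exp_mul]
    ring_nf
  exact mul_le_mul_right (rpow_eq ▸ hG' _ (exp_pos _)) _

lemma tendsto_lintegral_exp_mul_comp_exp (ha : 0 < a) (hGm : Measurable G)
    (hC : C ≠ ∞) (hC' : C' ≠ ∞) (hG : ∀ t > 0, G t ≤ C)
    (hG' : ∀ t > 0, G t ≤ C' * ENNReal.ofReal (t ^ (-a))) (hlim : Tendsto G (𝓝[>] 0) (𝓝 L)) :
    Tendsto (fun l => ∫⁻ v, ENNReal.ofReal (exp (-a * v)) * G (exp (-l * v))) atTop
      (𝓝 (ENNReal.ofReal a⁻¹ * L)) := by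
  have limit_eq : ENNReal.ofReal a⁻¹ * L = ∫⁻ v, (Set.Ioi (0 : ℝ)).indicator
      (fun v => ENNReal.ofReal (exp (-a * v)) * L) v := by
    rw [lintegral_indicator measurableSet_Ioi, lintegral_mul_const _ (by fun_prop),
      lintegral_Ioi_zero_ofReal_exp_neg_mul ha]
  rw [limit_eq]
  refine tendsto_lintegral_filter_of_dominated_convergence
    (fun v => max C C' * ENNReal.ofReal (exp (-a * |v|))) (.of_forall fun l => by fun_prop) ?_ ?_ ?_
  · filter_upwards [eventually_ge_atTop 2] with l hl
    exact ae_of_all _ (exp_mul_comp_exp_le ha hG hG' hl)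
  · rw [lintegral_const_mul _ (by fun_prop)]
    exact ENNReal.mul_ne_top (max_lt hC.lt_top hC'.lt_top).ne
      (lintegral_ofReal_exp_neg_mul_abs_lt_top ha).ne
  · filter_upwards [Measure.ae_ne volume 0] with v hv
    rcases hv.lt_or_gt with hv | hv
    · rw [Set.indicator_of_notMem (Set.notMem_Ioi.2 hv.le)]
      exact tendsto_exp_mul_comp_exp_of_neg ha hC' hG' hv
    · rw [Set.indicator_of_mem (Set.mem_Ioi.2 hv)]
      exact tendsto_exp_mul_comp_exp_of_pos hlim hv

lemma tendsto_inv_one_sub_nhdsLT_one : Tendsto (fun s : ℝ => (1 - s)⁻¹) (𝓝[<] 1) atTop := by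
  refine tendsto_inv_nhdsGT_zero.comp (tendsto_nhdsWithin_iff.2 ⟨?_, ?_⟩)
  · exact (Continuous.tendsto' (by fun_prop) 1 0 (sub_self 1)).mono_left nhdsWithin_le_nhds
  · filter_upwards [self_mem_nhdsWithin] with s hs using sub_pos.2 (Set.mem_Iio.1 hs)

-- As `s → 1`, the probability measures with density proportional to `(1 - s) t ^ ((1 - s) a - 1)`
-- on `(0, 1)` concentrate at `0`, while the part of the integral over `[1, ∞)` vanishes.
lemma tendsto_one_sub_mul_lintegral_rpow {H : ℝ → ℝ≥0∞} (ha : 0 < a) (hHm : Measurable H)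
    (hC : C ≠ ∞) (hC' : C' ≠ ∞) (hH : ∀ t > 0, H t ≤ C * ENNReal.ofReal (t ^ a))
    (hH' : ∀ t > 0, H t ≤ C')
    (hlim : Tendsto (fun t => ENNReal.ofReal (t ^ (-a)) * H t) (𝓝[>] 0) (𝓝 L)) :
    Tendsto (fun s : ℝ => ENNReal.ofReal (1 - s) *
        ∫⁻ t in Set.Ioi (0 : ℝ), ENNReal.ofReal (t ^ (-(s * a + 1))) * H t)
      (𝓝[<] 1) (𝓝 (ENNReal.ofReal a⁻¹ * L)) := by
  have le_const (t : ℝ) (ht : t > 0) : ENNReal.ofReal (t ^ (-a)) * H t ≤ C := by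
    calc
      _ ≤ ENNReal.ofReal (t ^ (-a)) * (C * ENNReal.ofReal (t ^ a)) := by gcongr; exact hH t ht
      _ = C := by
        rw [mul_left_comm, ← ENNReal.ofReal_mul (by positivity), ← rpow_add ht]
        simp
  have le_rpow (t : ℝ) (ht : t > 0) :
      ENNReal.ofReal (t ^ (-a)) * H t ≤ C' * ENNReal.ofReal (t ^ (-a)) := by
    rw [mul_comm]
    gcongr
    exact hH' t ht
  have := (tendsto_lintegral_exp_mul_comp_exp ha (by fun_prop) hC hC' le_const le_rpow hlim).comp
    tendsto_inv_one_sub_nhdsLT_one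
  refine this.congr' ?_
  filter_upwards [self_mem_nhdsWithin] with s hs
  exact (one_sub_mul_lintegral_rpow_eq hs a H).symm

end AbelianLimit

section HeatKernel

variable {E : Type*} [NormedAddCommGroup E] [InnerProductSpace ℝ E]

/-- The Gauss–Weierstrass heat kernel `p_t(x, y)` of the Laplacian (not of half of it). -/
noncomputable def heatKernel (t : ℝ) (x y : E) : ℝ :=
  (4 * π * t) ^ (-(finrank ℝ E : ℝ) / 2) * exp (-‖x - y‖ ^ 2 / (4 * t))

@[fun_prop]
lemma continuous_heatKernel_right (t : ℝ) (x : E) : Continuous (heatKernel t x) := by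
  unfold heatKernel
  fun_prop

lemma heatKernel_nonneg {t : ℝ} (ht : 0 ≤ t) (x y : E) : 0 ≤ heatKernel t x y := by
  unfold heatKernel
  positivity

lemma heatKernel_add_right (t : ℝ) (x y : E) : heatKernel t x (x + y) = heatKernel t 0 y := by
  simp [heatKernel]

variable [FiniteDimensional ℝ E] [MeasurableSpace E] [BorelSpace E] {t : ℝ}

lemma integrable_heatKernel_zero (ht : 0 < t) : Integrable (heatKernel t (0 : E)) := by
  have integrable_exp : Integrable fun y : E => exp (-(4 * t)⁻¹ * ‖y‖ ^ 2) := by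
    refine .of_integral_ne_zero ?_
    rw [GaussianFourier.integral_rexp_neg_mul_sq_norm (by positivity)]
    positivity
  refine (integrable_exp.const_mul ((4 * π * t) ^ (-(finrank ℝ E : ℝ) / 2))).congr
    (ae_of_all _ fun y => ?_)
  simp only [heatKernel, zero_sub, norm_neg]
  ring_nf

lemma integral_heatKernel_zero_mul_cexp (ht : 0 < t) (ξ : E) :
    ∫ y : E, (heatKernel t 0 y : ℂ) * Complex.exp (inner ℝ y ξ * Complex.I) =
      Complex.exp (-t * ‖ξ‖ ^ 2) := by
  have gaussian := GaussianFourier.integral_cexp_neg_mul_sq_norm_add (V := E)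
    (b := ((4 * t)⁻¹ : ℝ)) (by simpa using ht) Complex.I ξ
  have mass : (4 * π * t) ^ (-(finrank ℝ E : ℝ) / 2) *
      (π / (4 * t)⁻¹) ^ ((finrank ℝ E : ℝ) / 2) = 1 := by
    rw [div_inv_eq_mul, neg_div, rpow_neg (by positivity), show π * (4 * t) = 4 * π * t by ring]
    exact inv_mul_cancel₀ (by positivity)
  calc
    _ = ((4 * π * t) ^ (-(finrank ℝ E : ℝ) / 2) : ℝ) * ∫ y : E, Complex.exp
        (-((4 * t)⁻¹ : ℝ) * ‖y‖ ^ 2 + Complex.I * inner ℝ ξ y) := by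
      rw [← integral_const_mul]
      refine integral_congr_ae (ae_of_all _ fun y => ?_)
      simp only [heatKernel, zero_sub, norm_neg, Complex.ofReal_mul, Complex.ofReal_exp, mul_assoc,
        ← Complex.exp_add, real_inner_comm ξ y]
      push_cast
      ring_nf
    _ = ((4 * π * t) ^ (-(finrank ℝ E : ℝ) / 2) * (π / (4 * t)⁻¹) ^ ((finrank ℝ E : ℝ) / 2) : ℝ) *
        Complex.exp (-t * ‖ξ‖ ^ 2) := by
      have base_nonneg : 0 ≤ π / (4 * t)⁻¹ := by positivity
      rw [gaussian, Complex.ofReal_mul, mul_assoc, Complex.ofReal_cpow base_nonneg, Complex.I_sq]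
      push_cast
      field_simp
    _ = _ := by rw [mass, Complex.ofReal_one, one_mul]

lemma withDensity_heatKernel_zero (ht : 0 < t) :
    volume.withDensity (fun y : E => ENNReal.ofReal (heatKernel t 0 y)) =
      (stdGaussian E).map (√(2 * t) • ·) := by
  have : IsFiniteMeasure (volume.withDensity fun y : E => ENNReal.ofReal (heatKernel t 0 y)) :=
    isFiniteMeasure_withDensity_ofReal (integrable_heatKernel_zero ht).2
  refine Measure.ext_of_charFun (funext fun ξ => ?_)
  rw [charFun_apply, integral_withDensity_eq_integral_toReal_smul (by fun_prop)
    (ae_of_all _ fun _ => ENNReal.ofReal_lt_top), charFun_map_smul, charFun_stdGaussian, norm_smul]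
  simp only [ENNReal.toReal_ofReal (heatKernel_nonneg ht.le _ _), Complex.real_smul]
  rw [integral_heatKernel_zero_mul_cexp ht]
  congr 1
  norm_cast
  rw [mul_pow, norm_of_nonneg (sqrt_nonneg _), sq_sqrt (by positivity)]
  ring

lemma lintegral_heatKernel_mul (ht : 0 < t) (x : E) {F : E → ℝ≥0∞} (hF : Measurable F) :
    ∫⁻ y, ENNReal.ofReal (heatKernel t x y) * F y =
      ∫⁻ z, F (x + √(2 * t) • z) ∂stdGaussian E := by
  calc
    _ = ∫⁻ y, ENNReal.ofReal (heatKernel t 0 y) * F (x + y) := by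
      simp only [← lintegral_add_left_eq_self (fun y => ENNReal.ofReal (heatKernel t x y) * F y) x,
        heatKernel_add_right]
    _ = ∫⁻ y, F (x + y) ∂(stdGaussian E).map (√(2 * t) • ·) := by
      rw [← withDensity_heatKernel_zero ht,
        lintegral_withDensity_eq_lintegral_mul _ (by fun_prop) (by fun_prop)]
      rfl
    _ = _ := lintegral_map (by fun_prop) (by fun_prop)

end HeatKernel

section GaussianMoments

lemma integral_abs_rpow_gaussianReal {p : ℝ} (hp : -1 < p) :
    ∫ r, |r| ^ p ∂gaussianReal 0 1 = 2 ^ (p / 2) * Gamma ((p + 1) / 2) / √π := by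
  have half_line : ∫ r in Set.Ioi (0 : ℝ), gaussianPDFReal 0 1 r * r ^ p =
      (√(2 * π))⁻¹ * ∫ r in Set.Ioi (0 : ℝ), r ^ p * exp (-(1 / 2) * r ^ (2 : ℝ)) := by
    rw [← integral_const_mul]
    congr with r
    simp only [gaussianPDFReal, sub_zero, NNReal.coe_one, mul_one, rpow_two]
    ring_nf
  have sqrt_two_ne : (√2 : ℝ) ≠ 0 := by positivity
  have sqrt_pi_ne : (√π : ℝ) ≠ 0 := by positivity
  have half_rpow : (1 / 2 : ℝ) ^ (-(p + 1) / 2) = 2 ^ (p / 2) * √2 := by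
    rw [one_div, inv_rpow two_pos.le, ← rpow_neg two_pos.le, sqrt_eq_rpow, ← rpow_add two_pos]
    ring_nf
  have pdf_abs (r : ℝ) : gaussianPDFReal 0 1 |r| = gaussianPDFReal 0 1 r := by
    simp [gaussianPDFReal]
  calc
    _ = ∫ r, gaussianPDFReal 0 1 |r| * |r| ^ p := by
      simp only [integral_gaussianReal_eq_integral_smul one_ne_zero, pdf_abs, smul_eq_mul]
    _ = 2 * ∫ r in Set.Ioi (0 : ℝ), gaussianPDFReal 0 1 r * r ^ p :=
      integral_comp_abs (f := fun r => gaussianPDFReal 0 1 r * r ^ p)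
    _ = _ := by
      rw [half_line, integral_rpow_mul_exp_neg_mul_rpow two_pos hp one_half_pos, half_rpow,
        sqrt_mul two_pos.le]
      field_simp

lemma two_rpow_mul_integral_abs_rpow_gaussianReal {p : ℝ} (hp : 0 < p) :
    2 ^ (p / 2) * ∫ r, |r| ^ p ∂gaussianReal 0 1 = 2 * Gamma p / Gamma (p / 2) := by
  have duplication := Gamma_mul_Gamma_add_half (p / 2)
  rw [← add_div, mul_div_cancel₀ p two_ne_zero, rpow_sub two_pos, rpow_one] at duplication
  have two_rpow : (2 : ℝ) ^ p = 2 ^ (p / 2) * 2 ^ (p / 2) := by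
    rw [← rpow_add two_pos, add_halves]
  have Gamma_pos : 0 < Gamma (p / 2) := Gamma_pos_of_pos (half_pos hp)
  rw [integral_abs_rpow_gaussianReal (by linarith)]
  rw [two_rpow] at duplication
  field_simp at duplication ⊢
  linear_combination duplication

variable {E : Type*} [NormedAddCommGroup E] [InnerProductSpace ℝ E] [FiniteDimensional ℝ E]
  [MeasurableSpace E] [BorelSpace E] {p : ℝ}

lemma lintegral_enorm_rpow_stdGaussian_lt_top (hp : 0 < p) :
    ∫⁻ z, ‖z‖ₑ ^ p ∂stdGaussian E < ∞ := by
  have memLp := IsGaussian.memLp_id (stdGaussian E) (.ofReal p) ENNReal.ofReal_ne_top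
  simpa [ENNReal.toReal_ofReal hp.le] using
    lintegral_rpow_enorm_lt_top_of_eLpNorm_lt_top (by simpa using hp) ENNReal.ofReal_ne_top memLp.2

lemma map_stdGaussian_strongDual (A : StrongDual ℝ E) :
    (stdGaussian E).map A = (gaussianReal 0 1).map (‖A‖ * ·) := by
  rw [IsGaussian.map_eq_gaussianReal, integral_strongDual_stdGaussian, variance_dual_stdGaussian,
    gaussianReal_map_const_mul, mul_zero, mul_one]
  congr 1
  ext
  simp

lemma lintegral_enorm_strongDual_rpow_stdGaussian (hp : 0 < p) (A : StrongDual ℝ E) :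
    ∫⁻ z, ‖A z‖ₑ ^ p ∂stdGaussian E =
      ENNReal.ofReal (∫ r, |r| ^ p ∂gaussianReal 0 1) * ‖A‖ₑ ^ p := by
  have integrable_moment : Integrable (fun r : ℝ => |r| ^ p) (gaussianReal 0 1) := by
    simpa [ENNReal.toReal_ofReal hp.le] using
      (memLp_id_gaussianReal' (.ofReal p) ENNReal.ofReal_ne_top).integrable_norm_rpow'
  calc
    _ = ∫⁻ r, ‖r‖ₑ ^ p ∂(stdGaussian E).map A := (lintegral_map (by fun_prop) (by fun_prop)).symm
    _ = (∫⁻ r, ‖r‖ₑ ^ p ∂gaussianReal 0 1) * ‖A‖ₑ ^ p := by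
      rw [map_stdGaussian_strongDual, lintegral_map (by fun_prop) (by fun_prop),
        ← lintegral_mul_const _ (by fun_prop)]
      simp only [enorm_mul, enorm_norm, ENNReal.mul_rpow_of_nonneg _ _ hp.le, mul_comm]
    _ = _ := by
      rw [ofReal_integral_eq_lintegral_ofReal integrable_moment
        (ae_of_all _ fun _ => by positivity)]
      simp only [Real.enorm_eq_ofReal_abs, ENNReal.ofReal_rpow_of_nonneg (abs_nonneg _) hp.le]

end GaussianMoments

section TranslationEnergy

lemma enorm_slope_rpow_le_indicator {E F : Type*} [NormedAddCommGroup E] [NormedSpace ℝ E]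
    [NormedAddCommGroup F] [NormedSpace ℝ F] {p : ℝ} {f : E → F} {K : NNReal} (hp : 0 < p)
    (hf : LipschitzWith K f) {z : E} {r : ℝ} (hr : |r| ≤ 1) (x : E) :
    ‖r⁻¹ • (f (x + r • z) - f x)‖ₑ ^ p ≤
      (Metric.cthickening ‖z‖ (tsupport f)).indicator (fun _ => (K * ‖z‖ₑ) ^ p) x := by
  by_cases hx : x ∈ Metric.cthickening ‖z‖ (tsupport f)
  · rw [Set.indicator_of_mem hx]
    gcongr
    rcases eq_or_ne r 0 with rfl | hr0
    · simp
    have lipschitz_bound : ‖f (x + r • z) - f x‖ₑ ≤ K * (‖r‖ₑ * ‖z‖ₑ) := by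
      simpa [edist_eq_enorm_sub, enorm_smul] using hf.edist_le_mul (x + r • z) x
    calc
      _ ≤ ‖r⁻¹‖ₑ * (K * (‖r‖ₑ * ‖z‖ₑ)) := by
        rw [enorm_smul]
        gcongr
      _ = ‖r⁻¹ * r‖ₑ * (K * ‖z‖ₑ) := by
        rw [enorm_mul]
        ring
      _ = _ := by rw [inv_mul_cancel₀ hr0, enorm_one, one_mul]
  · have norm_smul_le : ‖r • z‖ ≤ ‖z‖ := by
      rw [norm_smul]
      exact mul_le_of_le_one_left (norm_nonneg z) hr
    have hx₀ : x ∉ tsupport f := fun h => hx (Metric.self_subset_cthickening _ h)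
    have hxr : x + r • z ∉ tsupport f := fun h =>
      hx (Metric.mem_cthickening_of_dist_le _ _ _ _ h (by simpa [dist_eq_norm] using norm_smul_le))
    simp [image_eq_zero_of_notMem_tsupport hx₀, image_eq_zero_of_notMem_tsupport hxr, hp]

variable {E F : Type*} [NormedAddCommGroup E] [MeasurableSpace E] [NormedAddCommGroup F]

/-- `‖f(· + w) - f‖_p ^ p`, the `p`-th power of the `L^p` modulus of continuity of `f` at the
translation `w`; it is a lower integral, so it makes sense for every `f` and every real `p`. -/
noncomputable def translationEnergy (μ : Measure E) (p : ℝ) (f : E → F) (w : E) : ℝ≥0∞ :=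
  ∫⁻ x, ‖f (x + w) - f x‖ₑ ^ p ∂μ

variable {μ : Measure E} {p : ℝ} {f : E → F} {K : NNReal}

lemma measurable_translationEnergy [BorelSpace E] [SecondCountableTopology E] [SFinite μ]
    (hf : Continuous f) : Measurable (translationEnergy μ p f) := by
  refine Measurable.lintegral_prod_right'
    (f := fun q : E × E => ‖f (q.2 + q.1) - f q.2‖ₑ ^ p) ?_
  have : Continuous fun q : E × E => ‖f (q.2 + q.1) - f q.2‖ₑ := by fun_prop
  exact this.measurable.pow_const p

lemma translationEnergy_le [BorelSpace E] [SecondCountableTopology E] [μ.IsAddRightInvariant]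
    (hp : 0 < p) {w : E} {c : ℝ≥0∞} (hc : ∀ x, ‖f (x + w) - f x‖ₑ ^ p ≤ c) :
    translationEnergy μ p f w ≤ 2 * μ (tsupport f) * c := by
  have measurableSet_tsupport : MeasurableSet (tsupport f) := (isClosed_tsupport f).measurableSet
  have indicator_bound (x : E) : ‖f (x + w) - f x‖ₑ ^ p ≤
      (tsupport f).indicator (fun _ => c) x + (tsupport f).indicator (fun _ => c) (x + w) := by
    by_cases hx : x ∈ tsupport f
    · rw [Set.indicator_of_mem hx]
      exact (hc x).trans le_self_add
    by_cases hxw : x + w ∈ tsupport f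
    · rw [Set.indicator_of_mem hxw]
      exact (hc x).trans le_add_self
    simp [image_eq_zero_of_notMem_tsupport hx, image_eq_zero_of_notMem_tsupport hxw, hp]
  refine (lintegral_mono indicator_bound).trans_eq ?_
  rw [lintegral_add_left (measurable_const.indicator measurableSet_tsupport),
    lintegral_add_right_eq_self, lintegral_indicator_const measurableSet_tsupport, ← two_mul]
  ring

lemma translationEnergy_le_of_lipschitzWith [BorelSpace E] [SecondCountableTopology E]
    [μ.IsAddRightInvariant] (hp : 0 < p) (hf : LipschitzWith K f) (w : E) :
    translationEnergy μ p f w ≤ 2 * μ (tsupport f) * K ^ p * ‖w‖ₑ ^ p := by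
  rw [mul_assoc, ← ENNReal.mul_rpow_of_nonneg _ _ hp.le]
  refine translationEnergy_le hp fun x => ?_
  gcongr
  simpa [edist_eq_enorm_sub] using hf.edist_le_mul (x + w) x

lemma exists_forall_translationEnergy_le [BorelSpace E] [SecondCountableTopology E]
    [μ.IsAddRightInvariant] [IsFiniteMeasureOnCompacts μ] (hp : 0 < p) (hf : Continuous f)
    (hsupp : HasCompactSupport f) : ∃ C ≠ ∞, ∀ w, translationEnergy μ p f w ≤ C := by
  obtain ⟨M, hM⟩ := hf.bounded_above_of_compact_support hsupp
  have enorm_le (x : E) : ‖f x‖ₑ ≤ ENNReal.ofReal M := by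
    simpa [← ofReal_norm] using ENNReal.ofReal_le_ofReal (hM x)
  refine ⟨2 * μ (tsupport f) * (ENNReal.ofReal M + ENNReal.ofReal M) ^ p, ?_, fun w => ?_⟩
  · have := hsupp.isCompact.measure_ne_top (μ := μ)
    finiteness
  · refine translationEnergy_le hp fun x => ?_
    gcongr
    exact enorm_sub_le.trans (add_le_add (enorm_le _) (enorm_le _))

section Derivative

variable [NormedSpace ℝ E] [NormedSpace ℝ F]

lemma lintegral_enorm_fderiv_rpow_ne_top [OpensMeasurableSpace E] [IsFiniteMeasureOnCompacts μ]
    (hp : 0 < p) (hf : LipschitzWith K f) (hsupp : HasCompactSupport f) :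
    ∫⁻ x, ‖fderiv ℝ f x‖ₑ ^ p ∂μ ≠ ∞ := by
  have fderiv_bound (x : E) :
      ‖fderiv ℝ f x‖ₑ ^ p ≤ (tsupport f).indicator (fun _ => (K : ℝ≥0∞) ^ p) x := by
    by_cases hx : x ∈ tsupport f
    · rw [Set.indicator_of_mem hx]
      gcongr
      exact enorm_le_coe.2 (norm_fderiv_le_of_lipschitz ℝ hf)
    · simp [← ofReal_norm, fderiv_of_notMem_tsupport ℝ hx, hp]
  refine ne_top_of_le_ne_top ?_ (lintegral_mono fderiv_bound)
  rw [lintegral_indicator_const (isClosed_tsupport f).measurableSet]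
  have := hsupp.isCompact.measure_ne_top (μ := μ)
  finiteness

variable [FiniteDimensional ℝ E] [FiniteDimensional ℝ F] [BorelSpace E] [μ.IsAddHaarMeasure]

lemma tendsto_translationEnergy_smul (hp : 0 < p) (hf : LipschitzWith K f)
    (hsupp : HasCompactSupport f) (z : E) :
    Tendsto (fun r : ℝ => ‖r⁻¹‖ₑ ^ p * translationEnergy μ p f (r • z)) (𝓝[≠] 0)
      (𝓝 (∫⁻ x, ‖fderiv ℝ f x z‖ₑ ^ p ∂μ)) := by
  have compact : IsCompact (Metric.cthickening ‖z‖ (tsupport f)) := hsupp.isCompact.cthickening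
  have slope_energy (r : ℝ) : ‖r⁻¹‖ₑ ^ p * translationEnergy μ p f (r • z) =
      ∫⁻ x, ‖r⁻¹ • (f (x + r • z) - f x)‖ₑ ^ p ∂μ := by
    rw [translationEnergy, ← lintegral_const_mul' _ _ (by finiteness)]
    simp only [enorm_smul, ENNReal.mul_rpow_of_nonneg _ _ hp.le]
  simp only [slope_energy]
  refine tendsto_lintegral_filter_of_dominated_convergence
    ((Metric.cthickening ‖z‖ (tsupport f)).indicator fun _ => (K * ‖z‖ₑ) ^ p) ?_ ?_ ?_ ?_
  · have := hf.continuous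
    exact .of_forall fun r => (Continuous.measurable (by fun_prop)).pow_const p
  · have abs_le_one : ∀ᶠ r : ℝ in 𝓝[≠] 0, |r| ≤ 1 :=
      nhdsWithin_le_nhds (continuous_abs.continuousAt.eventually_le_const (by simp))
    filter_upwards [abs_le_one] with r hr
    exact ae_of_all _ (enorm_slope_rpow_le_indicator hp hf hr)
  · rw [lintegral_indicator_const compact.measurableSet]
    have := compact.measure_ne_top (μ := μ)
    finiteness
  · filter_upwards [hf.ae_differentiableAt] with x hx
    have slope := (hx.hasFDerivAt.hasLineDerivAt z).tendsto_slope_zero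
    exact slope.enorm.ennrpow_const p

lemma tendsto_lintegral_translationEnergy_smul {ν : Measure E} (hp : 0 < p)
    (hν : ∫⁻ z, ‖z‖ₑ ^ p ∂ν ≠ ∞) (hf : LipschitzWith K f) (hsupp : HasCompactSupport f) :
    Tendsto (fun r : ℝ => ‖r⁻¹‖ₑ ^ p * ∫⁻ z, translationEnergy μ p f (r • z) ∂ν) (𝓝[≠] 0)
      (𝓝 (∫⁻ z, ∫⁻ x, ‖fderiv ℝ f x z‖ₑ ^ p ∂μ ∂ν)) := by
  have measurable_energy := measurable_translationEnergy (μ := μ) (p := p) hf.continuous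
  have measure_ne_top := hsupp.isCompact.measure_ne_top (μ := μ)
  have scaled_energy (r : ℝ) : ‖r⁻¹‖ₑ ^ p * ∫⁻ z, translationEnergy μ p f (r • z) ∂ν =
      ∫⁻ z, ‖r⁻¹‖ₑ ^ p * translationEnergy μ p f (r • z) ∂ν :=
    (lintegral_const_mul' _ _ (by finiteness)).symm
  simp only [scaled_energy]
  refine tendsto_lintegral_filter_of_dominated_convergence
    (fun z => 2 * μ (tsupport f) * K ^ p * ‖z‖ₑ ^ p) (.of_forall fun r => by fun_prop) ?_ ?_
    (ae_of_all _ (tendsto_translationEnergy_smul hp hf hsupp))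
  · filter_upwards [self_mem_nhdsWithin] with r (hr : r ≠ 0)
    refine ae_of_all _ fun z => ?_
    calc
      _ ≤ ‖r⁻¹‖ₑ ^ p * (2 * μ (tsupport f) * K ^ p * ‖r • z‖ₑ ^ p) := by
        gcongr
        exact translationEnergy_le_of_lipschitzWith hp hf _
      _ = ‖r⁻¹ * r‖ₑ ^ p * (2 * μ (tsupport f) * K ^ p * ‖z‖ₑ ^ p) := by
        simp only [enorm_smul, enorm_mul, ENNReal.mul_rpow_of_nonneg _ _ hp.le]
        ring
      _ = _ := by rw [inv_mul_cancel₀ hr, enorm_one, ENNReal.one_rpow, one_mul]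
  · rw [lintegral_const_mul' _ _ (by finiteness)]
    finiteness

end Derivative

end TranslationEnergy

section HeatEnergy

variable {E : Type*} [NormedAddCommGroup E] [InnerProductSpace ℝ E] [FiniteDimensional ℝ E]
  [MeasurableSpace E] [BorelSpace E]

/-- `∫∫ p_t(x, y) |f y - f x| ^ p dy dx`, the inner double integral of the Besov seminorm. -/
noncomputable def heatEnergy (p : ℝ) (f : E → ℝ) (t : ℝ) : ℝ≥0∞ :=
  ∫⁻ x, ∫⁻ y, ENNReal.ofReal (heatKernel t x y * |f y - f x| ^ p)

/-- The `p`-th power `𝒩_{s,p}(f) ^ p` of the heat-semigroup Besov seminorm, possibly infinite. -/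
noncomputable def heatBesovEnergy (s p : ℝ) (f : E → ℝ) : ℝ≥0∞ :=
  ∫⁻ t in Set.Ioi (0 : ℝ), ENNReal.ofReal (t ^ (-(s * p / 2 + 1))) * heatEnergy p f t

variable {p t : ℝ} {f : E → ℝ} {K : NNReal}

lemma measurable_heatEnergy (hf : Measurable f) : Measurable (heatEnergy p f) := by
  unfold heatEnergy heatKernel
  refine Measurable.lintegral_prod_right' (f := fun q : ℝ × E => ∫⁻ y, ENNReal.ofReal
    ((4 * π * q.1) ^ (-(finrank ℝ E : ℝ) / 2) * exp (-‖q.2 - y‖ ^ 2 / (4 * q.1)) *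
      |f y - f q.2| ^ p)) (Measurable.lintegral_prod_right' (f := fun q : (ℝ × E) × E =>
    ENNReal.ofReal ((4 * π * q.1.1) ^ (-(finrank ℝ E : ℝ) / 2) *
      exp (-‖q.1.2 - q.2‖ ^ 2 / (4 * q.1.1)) * |f q.2 - f q.1.2| ^ p)) ?_)
  fun_prop

lemma heatEnergy_eq_lintegral_stdGaussian (hp : 0 < p) (hf : Continuous f) (ht : 0 < t) :
    heatEnergy p f t = ∫⁻ z, translationEnergy volume p f (√(2 * t) • z) ∂stdGaussian E := by
  have measurable_increment : Measurable fun q : E × E =>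
      ‖f (q.1 + √(2 * t) • q.2) - f q.1‖ₑ ^ p :=
    (Continuous.measurable (by fun_prop)).pow_const p
  calc
    _ = ∫⁻ x, ∫⁻ y, ENNReal.ofReal (heatKernel t x y) * ‖f y - f x‖ₑ ^ p := by
      simp only [heatEnergy, ENNReal.ofReal_mul (heatKernel_nonneg ht.le _ _),
        Real.enorm_eq_ofReal_abs, ENNReal.ofReal_rpow_of_nonneg (abs_nonneg _) hp.le]
    _ = ∫⁻ x, ∫⁻ z, ‖f (x + √(2 * t) • z) - f x‖ₑ ^ p ∂stdGaussian E :=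
      lintegral_congr fun x => lintegral_heatKernel_mul ht x
        ((Continuous.measurable (by fun_prop)).pow_const p)
    _ = _ := lintegral_lintegral_swap measurable_increment.aemeasurable

lemma exists_forall_heatEnergy_le (hp : 0 < p) (hf : Continuous f) (hsupp : HasCompactSupport f) :
    ∃ C ≠ ∞, ∀ t > 0, heatEnergy p f t ≤ C := by
  obtain ⟨C, hC, energy_le⟩ := exists_forall_translationEnergy_le (μ := volume) hp hf hsupp
  refine ⟨C, hC, fun t ht => ?_⟩
  rw [heatEnergy_eq_lintegral_stdGaussian hp hf ht]
  simpa using lintegral_mono (μ := stdGaussian E) fun z => energy_le (√(2 * t) • z)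

lemma enorm_sqrt_two_mul_rpow (ht : 0 < t) (p : ℝ) :
    ‖√(2 * t)‖ₑ ^ p = ENNReal.ofReal (2 ^ (p / 2)) * ENNReal.ofReal (t ^ (p / 2)) := by
  rw [Real.enorm_of_nonneg (sqrt_nonneg _), ENNReal.ofReal_rpow_of_pos (by positivity),
    ← ENNReal.ofReal_mul (by positivity), ← mul_rpow two_pos.le ht.le,
    rpow_div_two_eq_sqrt _ (by positivity)]

lemma exists_forall_heatEnergy_le_rpow (hp : 0 < p) (hf : LipschitzWith K f)
    (hsupp : HasCompactSupport f) :
    ∃ C ≠ ∞, ∀ t > 0, heatEnergy p f t ≤ C * ENNReal.ofReal (t ^ (p / 2)) := by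
  have measure_ne_top := hsupp.isCompact.measure_ne_top (μ := volume)
  have moment_ne_top := (lintegral_enorm_rpow_stdGaussian_lt_top (E := E) hp).ne
  refine ⟨2 * volume (tsupport f) * K ^ p * ENNReal.ofReal (2 ^ (p / 2)) *
    ∫⁻ z, ‖z‖ₑ ^ p ∂stdGaussian E, by finiteness, fun t ht => ?_⟩
  calc
    _ ≤ ∫⁻ z, 2 * volume (tsupport f) * K ^ p * ‖√(2 * t) • z‖ₑ ^ p ∂stdGaussian E := by
      rw [heatEnergy_eq_lintegral_stdGaussian hp hf.continuous ht]
      exact lintegral_mono fun z => translationEnergy_le_of_lipschitzWith hp hf _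
    _ = 2 * volume (tsupport f) * K ^ p * (‖√(2 * t)‖ₑ ^ p * ∫⁻ z, ‖z‖ₑ ^ p ∂stdGaussian E) := by
      simp only [enorm_smul, ENNReal.mul_rpow_of_nonneg _ _ hp.le]
      rw [lintegral_const_mul' _ _ (by finiteness), lintegral_const_mul' _ _ (by finiteness)]
    _ = _ := by
      rw [enorm_sqrt_two_mul_rpow ht]
      ring

lemma lintegral_lintegral_enorm_fderiv_apply_rpow_stdGaussian (hp : 0 < p) (f : E → ℝ) :
    ∫⁻ z, (∫⁻ x, ‖fderiv ℝ f x z‖ₑ ^ p) ∂stdGaussian E =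
      ENNReal.ofReal (∫ r, |r| ^ p ∂gaussianReal 0 1) * ∫⁻ x, ‖fderiv ℝ f x‖ₑ ^ p := by
  have measurable_apply : Measurable fun q : E × E => fderiv ℝ f q.2 q.1 :=
    (isBoundedBilinearMap_apply (𝕜 := ℝ) (E := E) (F := ℝ)).continuous.measurable.comp
      (((measurable_fderiv ℝ f).comp measurable_snd).prodMk measurable_fst)
  rw [lintegral_lintegral_swap (by exact (measurable_apply.enorm.pow_const p).aemeasurable)]
  simp only [lintegral_enorm_strongDual_rpow_stdGaussian hp]
  exact lintegral_const_mul' _ _ ENNReal.ofReal_ne_top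

lemma tendsto_sqrt_two_mul_nhdsNE_zero :
    Tendsto (fun t : ℝ => √(2 * t)) (𝓝[>] 0) (𝓝[≠] 0) := by
  refine tendsto_nhdsWithin_iff.2 ⟨?_, ?_⟩
  · exact (Continuous.tendsto' (by fun_prop) 0 0 (by simp)).mono_left nhdsWithin_le_nhds
  · filter_upwards [self_mem_nhdsWithin] with t (ht : 0 < t)
    exact (sqrt_pos.2 (by positivity)).ne'

lemma tendsto_rpow_mul_heatEnergy (hp : 0 < p) (hf : LipschitzWith K f)
    (hsupp : HasCompactSupport f) :
    Tendsto (fun t => ENNReal.ofReal (t ^ (-(p / 2))) * heatEnergy p f t) (𝓝[>] 0)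
      (𝓝 (ENNReal.ofReal (2 * Gamma p / Gamma (p / 2)) * ∫⁻ x, ‖fderiv ℝ f x‖ₑ ^ p)) := by
  have limit_stdGaussian := (tendsto_lintegral_translationEnergy_smul (μ := volume) hp
    (lintegral_enorm_rpow_stdGaussian_lt_top hp).ne hf hsupp).comp tendsto_sqrt_two_mul_nhdsNE_zero
  rw [lintegral_lintegral_enorm_fderiv_apply_rpow_stdGaussian hp] at limit_stdGaussian
  rw [← two_rpow_mul_integral_abs_rpow_gaussianReal hp, ENNReal.ofReal_mul (by positivity),
    mul_assoc]
  refine (ENNReal.Tendsto.const_mul limit_stdGaussian (.inr ENNReal.ofReal_ne_top)).congr' ?_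
  filter_upwards [self_mem_nhdsWithin] with t (ht : 0 < t)
  have rescale : ENNReal.ofReal (2 ^ (p / 2)) * ‖(√(2 * t))⁻¹‖ₑ ^ p =
      ENNReal.ofReal (t ^ (-(p / 2))) := by
    rw [enorm_inv (by positivity), ENNReal.inv_rpow, ← ENNReal.rpow_neg,
      enorm_sqrt_two_mul_rpow ht, ← mul_assoc, ← ENNReal.ofReal_mul (by positivity),
      ← rpow_add two_pos, neg_div, add_neg_cancel, rpow_zero, ENNReal.ofReal_one, one_mul]
  rw [Function.comp_apply, heatEnergy_eq_lintegral_stdGaussian hp hf.continuous ht, ← mul_assoc,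
    rescale]

lemma ofReal_integral_norm_fderiv_rpow (hp : 0 < p) (hf : LipschitzWith K f)
    (hsupp : HasCompactSupport f) :
    ENNReal.ofReal (∫ x, ‖fderiv ℝ f x‖ ^ p) = ∫⁻ x, ‖fderiv ℝ f x‖ₑ ^ p := by
  have lintegral_eq : ∫⁻ x, ‖fderiv ℝ f x‖ₑ ^ p = ∫⁻ x, ENNReal.ofReal (‖fderiv ℝ f x‖ ^ p) := by
    simp only [← ofReal_norm, ENNReal.ofReal_rpow_of_nonneg (norm_nonneg _) hp.le]
  have lintegral_ne_top := lintegral_enorm_fderiv_rpow_ne_top (μ := volume) hp hf hsupp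
  rw [lintegral_eq] at lintegral_ne_top ⊢
  rw [integral_eq_lintegral_of_nonneg_ae (ae_of_all _ fun x => by positivity)
    ((measurable_fderiv ℝ f).norm.pow_const p).aestronglyMeasurable,
    ENNReal.ofReal_toReal lintegral_ne_top]

end HeatEnergy

theorem besov_seminorm_limit_smooth_general {E : Type*} [NormedAddCommGroup E]
    [InnerProductSpace ℝ E] [FiniteDimensional ℝ E] [MeasurableSpace E] [BorelSpace E] {p : ℝ}
    (hp : 0 < p) {f : E → ℝ} {K : NNReal} (hf : LipschitzWith K f)
    (hsupp : HasCompactSupport f) :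
    Tendsto (fun s => ENNReal.ofReal (1 - s) * heatBesovEnergy s p f) (𝓝[<] 1)
      (𝓝 (ENNReal.ofReal
        (4 * Gamma p / (p * Gamma (p / 2)) * ∫ x, ‖fderiv ℝ f x‖ ^ p))) := by
  obtain ⟨C, hC, heatEnergy_le_rpow⟩ := exists_forall_heatEnergy_le_rpow hp hf hsupp
  obtain ⟨C', hC', heatEnergy_le⟩ := exists_forall_heatEnergy_le hp hf.continuous hsupp
  have abelian_limit := tendsto_one_sub_mul_lintegral_rpow (half_pos hp)
    (measurable_heatEnergy hf.continuous.measurable) hC hC' heatEnergy_le_rpow heatEnergy_le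
    (tendsto_rpow_mul_heatEnergy hp hf hsupp)
  have constant_eq : 4 * Gamma p / (p * Gamma (p / 2)) =
      (p / 2)⁻¹ * (2 * Gamma p / Gamma (p / 2)) := by
    field_simp
    norm_num
  rw [constant_eq, mul_assoc, ENNReal.ofReal_mul (by positivity),
    ENNReal.ofReal_mul (by positivity), ofReal_integral_norm_fderiv_rpow hp hf hsupp]
  simpa only [heatBesovEnergy, mul_div_assoc] using abelian_limit

theorem besov_seminorm_limit_smooth (n : ℕ) (hn : 1 ≤ n) (p : ℝ) (hp : 1 ≤ p)
    (f : EuclideanSpace ℝ (Fin n) → ℝ) (hf : ContDiff ℝ (⊤ : ℕ∞) f)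
    (hsupp : HasCompactSupport f) :
    Tendsto (fun s : ℝ => ENNReal.ofReal (1 - s) *
        ∫⁻ t in Set.Ioi (0 : ℝ),
          ENNReal.ofReal (t ^ (-(s * p / 2 + 1))) *
            ∫⁻ x, ∫⁻ y, ENNReal.ofReal
              ((4 * π * t) ^ (-(n : ℝ) / 2) * Real.exp (-‖x - y‖ ^ 2 / (4 * t)) *
                |f y - f x| ^ p))
      (𝓝[<] (1 : ℝ))
      (𝓝 (ENNReal.ofReal
        (4 * Real.Gamma p / (p * Real.Gamma (p / 2)) * ∫ x, ‖fderiv ℝ f x‖ ^ p))) := by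
  obtain ⟨K, lipschitzWith⟩ :=
    ContDiff.lipschitzWith_of_hasCompactSupport hsupp hf (by simp)
  simpa only [heatBesovEnergy, heatEnergy, heatKernel, finrank_euclideanSpace_fin] using
    besov_seminorm_limit_smooth_general (one_pos.trans_le hp) lipschitzWith hsupp
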